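/- Let X be a finite simple graph with at least one edge whose edge adjacency matrix M = M(X) is irreducible, i.e., for all darts d, e there exists k ≥ 1 with (M^k)_{d,e} ≠ 0. Then 0 is a simple eigenvalue of the edge Laplacian N(X): the multiplicity of 0 as a root of the characteristic polynomial (over ℝ) of N(X) equals 1. -/

import Mathlib

open Matrix Polynomial

variable {V : Type*} [Fintype V] [DecidableEq V]

/-- The edge adjacency matrix of a graph, indexed by darts. -/
def edgeAdj (R : Type*) [Ring R] (G : SimpleGraph V) [DecidableRel G.Adj] :
    Matrix G.Dart G.Dart R :=
  fun d e => if d.toProd.2 = e.toProd.1 ∧ d.toProd.1 ≠ e.toProd.2 then 1 else 0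

/-- The diagonal matrix with `(d,d)` entry `deg(head d) - 1`. -/
def degDiag (R : Type*) [Ring R] (G : SimpleGraph V) [DecidableRel G.Adj] :
    Matrix G.Dart G.Dart R :=
  Matrix.diagonal fun d => (G.degree d.toProd.2 : R) - 1

/-- The edge Laplacian `N = D - M`. -/
def edgeLap (R : Type*) [Ring R] (G : SimpleGraph V) [DecidableRel G.Adj] :
    Matrix G.Dart G.Dart R :=
  degDiag R G - edgeAdj R G

theorem edgeAdj_eq (G : SimpleGraph V) [DecidableRel G.Adj] (d e : G.Dart) :
    edgeAdj ℝ G d e = (if e.fst = d.snd then 1 else 0) - (if e = d.symm then 1 else 0) := by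
  have h : e = d.symm ↔ e.fst = d.snd ∧ d.fst = e.snd := by
    rw [SimpleGraph.Dart.ext_iff, Prod.ext_iff]
    simp [SimpleGraph.Dart.symm, eq_comm]
  unfold edgeAdj
  by_cases h1 : e.fst = d.snd <;> by_cases h2 : d.fst = e.snd <;> simp [h, h1, h2]
  exact fun h => absurd h.symm h1

theorem edgeAdj_row_sum (G : SimpleGraph V) [DecidableRel G.Adj] (d : G.Dart) :
    ∑ e, edgeAdj ℝ G d e = (G.degree d.snd : ℝ) - 1 := by
  simp only [edgeAdj_eq, Finset.sum_sub_distrib]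
  rw [Finset.sum_boole, G.dart_fst_fiber_card_eq_degree]
  simp

theorem edgeAdj_symm (G : SimpleGraph V) [DecidableRel G.Adj] (d e : G.Dart) :
    edgeAdj ℝ G d e = edgeAdj ℝ G e.symm d.symm := by
  unfold edgeAdj
  simp [SimpleGraph.Dart.symm, eq_comm]

theorem edgeAdj_col_sum (G : SimpleGraph V) [DecidableRel G.Adj] (e : G.Dart) :
    ∑ d, edgeAdj ℝ G d e = (G.degree e.fst : ℝ) - 1 := by
  have h := edgeAdj_row_sum G e.symm
  rw [← Equiv.sum_comp (SimpleGraph.Dart.symm_involutive (G := G)).toPerm] at h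
  simp only [edgeAdj_symm G _ e]
  exact h

theorem edgeAdj_nonneg (G : SimpleGraph V) [DecidableRel G.Adj] (d e : G.Dart) :
    0 ≤ edgeAdj ℝ G d e := by
  unfold edgeAdj
  split_ifs <;> norm_num

theorem edgeLap_mulVec_apply (G : SimpleGraph V) [DecidableRel G.Adj] (v : G.Dart → ℝ)
    (d : G.Dart) :
    (edgeLap ℝ G *ᵥ v) d = ∑ e, edgeAdj ℝ G d e * (v d - v e) := by
  simp only [edgeLap, degDiag, sub_mulVec, Pi.sub_apply, mulVec_diagonal, mul_sub,
    Finset.sum_sub_distrib, ← Finset.sum_mul, edgeAdj_row_sum]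
  rfl

theorem deg_pos (G : SimpleGraph V) [DecidableRel G.Adj]
    (hirr : ∀ d e : G.Dart, ∃ k : ℕ, 1 ≤ k ∧ (edgeAdj ℝ G ^ k) d e ≠ 0) (d : G.Dart) :
    0 < (G.degree d.snd : ℝ) - 1 := by
  rw [← edgeAdj_row_sum]
  refine lt_of_le_of_ne (Finset.sum_nonneg fun e _ => edgeAdj_nonneg G d e) fun h => ?_
  rw [eq_comm, Finset.sum_eq_zero_iff_of_nonneg fun e _ => edgeAdj_nonneg G d e] at h
  obtain ⟨k, hk, hne⟩ := hirr d d
  obtain ⟨k, rfl⟩ := Nat.exists_eq_add_of_le' hk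
  apply hne
  rw [pow_succ', mul_apply]
  exact Finset.sum_eq_zero fun e he => by rw [h e he, zero_mul]

theorem edgeLap_ker_const (G : SimpleGraph V) [DecidableRel G.Adj] [Nonempty G.Dart]
    (hirr : ∀ d e : G.Dart, ∃ k : ℕ, 1 ≤ k ∧ (edgeAdj ℝ G ^ k) d e ≠ 0)
    (v : G.Dart → ℝ) (hv : edgeLap ℝ G *ᵥ v = 0) : ∃ c : ℝ, v = fun _ => c := by
  obtain ⟨d₀, hd₀⟩ := Finite.exists_max v
  have step : ∀ d e, v d = v d₀ → edgeAdj ℝ G d e ≠ 0 → v e = v d₀ := by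
    intro d e hd hde
    have h := congrFun hv d
    rw [edgeLap_mulVec_apply, Pi.zero_apply, Finset.sum_eq_zero_iff_of_nonneg] at h
    · have := h e (Finset.mem_univ _)
      rcases mul_eq_zero.1 this with h | h
      · exact absurd h hde
      · linarith
    · intro e _
      exact mul_nonneg (edgeAdj_nonneg G d e) (by rw [hd]; linarith [hd₀ e])
  have key : ∀ k : ℕ, ∀ e, (edgeAdj ℝ G ^ k) d₀ e ≠ 0 → v e = v d₀ := by
    intro k
    induction k with
    | zero =>
      intro e he
      by_cases h : d₀ = e
      · rw [h]
      · simp [one_apply, h] at he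
    | succ k ih =>
      intro e he
      rw [pow_succ, mul_apply] at he
      obtain ⟨f, _, hf⟩ := Finset.exists_ne_zero_of_sum_ne_zero he
      exact step f e (ih f (left_ne_zero_of_mul hf)) (right_ne_zero_of_mul hf)
  refine ⟨v d₀, funext fun e => ?_⟩
  obtain ⟨k, _, hk⟩ := hirr d₀ e
  exact key k e hk

theorem edgeLap_const_eq_zero (G : SimpleGraph V) [DecidableRel G.Adj] [Nonempty G.Dart]
    (hirr : ∀ d e : G.Dart, ∃ k : ℕ, 1 ≤ k ∧ (edgeAdj ℝ G ^ k) d e ≠ 0)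
    (v : G.Dart → ℝ) (c : ℝ) (hv : edgeLap ℝ G *ᵥ v = fun _ => c) : c = 0 := by
  have hpos := deg_pos G hirr
  have h1 : ∑ d : G.Dart, ((G.degree d.snd : ℝ) - 1)⁻¹ * (edgeLap ℝ G *ᵥ v) d = 0 := by
    simp only [edgeLap_mulVec_apply, mul_sub, Finset.sum_sub_distrib, ← Finset.sum_mul,
      edgeAdj_row_sum, Finset.mul_sum]
    rw [sub_eq_zero, Finset.sum_comm]
    refine Finset.sum_congr rfl fun e _ => ?_
    rw [inv_mul_cancel_left₀ (hpos e).ne']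
    have h2 : ∀ d : G.Dart, ((G.degree d.snd : ℝ) - 1)⁻¹ * (edgeAdj ℝ G d e * v e)
        = ((G.degree e.fst : ℝ) - 1)⁻¹ * (edgeAdj ℝ G d e * v e) := by
      intro d
      by_cases h : d.snd = e.fst
      · rw [h]
      · have : edgeAdj ℝ G d e = 0 := by
          unfold edgeAdj
          rw [if_neg fun hh => h hh.1]
        simp [this]
    have h3 : 0 < (G.degree e.fst : ℝ) - 1 := hpos e.symm
    rw [Finset.sum_congr rfl fun d _ => h2 d, ← Finset.mul_sum, ← Finset.sum_mul,
      edgeAdj_col_sum, inv_mul_cancel_left₀ h3.ne']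
  rw [hv] at h1
  simp only [← Finset.sum_mul] at h1
  have h4 : 0 < ∑ d : G.Dart, ((G.degree d.snd : ℝ) - 1)⁻¹ :=
    Finset.sum_pos (fun d _ => inv_pos.2 (hpos d)) Finset.univ_nonempty
  exact (mul_eq_zero.1 h1).resolve_left h4.ne'

/-- If `X` has an edge and its edge adjacency matrix is irreducible, then `0` is a simple
eigenvalue of the edge Laplacian: its multiplicity as a root of the characteristic
polynomial is `1`. -/
theorem stmt16 (G : SimpleGraph V) [DecidableRel G.Adj] (hne : G.edgeSet.Nonempty)
    (hirr : ∀ d e : G.Dart, ∃ k : ℕ, 1 ≤ k ∧ (edgeAdj ℝ G ^ k) d e ≠ 0) :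
    (edgeLap ℝ G).charpoly.rootMultiplicity 0 = 1 := by
  have hD : Nonempty G.Dart := by
    obtain ⟨e, he⟩ := hne
    induction e using Sym2.ind with
    | _ x y => exact ⟨⟨(x, y), he⟩⟩
  have hone : edgeLap ℝ G *ᵥ (fun _ => (1 : ℝ)) = 0 := by
    funext d
    simp [edgeLap_mulVec_apply]
  have key : ∀ (k : ℕ) (v : G.Dart → ℝ), (toLin' (edgeLap ℝ G) ^ k) v = 0 →
      ∃ c : ℝ, v = fun _ => c := by
    intro k
    induction k with
    | zero =>
      intro v hv
      exact ⟨0, by rw [pow_zero, Module.End.one_apply] at hv; exact hv⟩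
    | succ k ih =>
      intro v hv
      rw [pow_succ, Module.End.mul_apply] at hv
      obtain ⟨c, hc⟩ := ih _ hv
      rw [toLin'_apply] at hc
      have hc0 := edgeLap_const_eq_zero G hirr v c hc
      subst hc0
      exact edgeLap_ker_const G hirr v hc
  rw [← charpoly_toLin', ← LinearMap.finrank_maxGenEigenspace_eq]
  have hspan : Module.End.maxGenEigenspace (toLin' (edgeLap ℝ G)) 0
      = Submodule.span ℝ {fun _ : G.Dart => (1 : ℝ)} := by
    ext v
    rw [Module.End.mem_maxGenEigenspace, Submodule.mem_span_singleton]
    simp only [zero_smul, sub_zero]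
    constructor
    · rintro ⟨k, hk⟩
      obtain ⟨c, rfl⟩ := key k v hk
      exact ⟨c, by ext; simp⟩
    · rintro ⟨c, rfl⟩
      refine ⟨1, ?_⟩
      rw [pow_one, map_smul, toLin'_apply, hone, smul_zero]
  rw [hspan]
  refine finrank_span_singleton fun h => ?_
  exact one_ne_zero (congrFun h hD.some)
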